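/- Let P ⊆ ℝⁿ be a uniformly discrete set of finite local complexity and let ψ : P → ℝᵐ be a function such that for every ε > 0 there exists a strongly P-equivariant function ψ_ε : P → ℝᵐ with |ψ(p) − ψ_ε(p)| < ε for all p ∈ P. Then there exists a smooth (C^∞) function φ : ℝⁿ → ℝᵐ whose restriction to P equals ψ and which is weakly P-equivariant in the Fréchet sense: for every l ∈ ℕ and every ε > 0 there exists a smooth strongly P-equivariant function φ' : ℝⁿ → ℝᵐ such that sup over x ∈ ℝⁿ and all multi-indices α with |α| ≤ l of |D^α(φ − φ')(x)| is less than ε. -/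

import Mathlib

/-
Fix a smooth bump `χ` with `χ 0 = 1` whose support is so small that its translates to the points of
`P` are disjoint. Then `φ = ∑ p ∈ P, ψ p • χ (· - p)` is smooth and extends `ψ`. The construction is
linear in `ψ`, turns functions on `P` that are equivariant with range `R` into functions on `ℝⁿ`
that are equivariant with range `R` plus the radius of the support, and bounds the `i`-th derivative
of the result by the sup norm of `ψ` times that of the `i`-th derivative of `χ`. Uniform
approximations of `ψ` on `P` therefore become approximations of `φ` together with its derivatives.
-/

open Metric Set

noncomputable section

/-- Euclidean space ℝⁿ. -/
abbrev Euc (n : ℕ) := EuclideanSpace ℝ (Fin n)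

/-- The translate `P - x = {p - x : p ∈ P}`. -/
def shiftSet {n : ℕ} (P : Set (Euc n)) (x : Euc n) : Set (Euc n) :=
  (fun p => p - x) '' P

/-- The `r`-patch of `P` around `x`: `B_r[P - x] = B(0,r) ∩ (P - x)`. -/
def patch {n : ℕ} (P : Set (Euc n)) (r : ℝ) (x : Euc n) : Set (Euc n) :=
  ball (0 : Euc n) r ∩ shiftSet P x

/-- `P` is uniformly discrete: there is a positive minimal distance between points. -/
def UnifDiscrete {n : ℕ} (P : Set (Euc n)) : Prop :=
  ∃ δ > 0, ∀ p ∈ P, ∀ q ∈ P, p ≠ q → δ ≤ ‖p - q‖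

/-- `P` is relatively dense: every ball of radius `R` contains a point of `P`. -/
def RelDense {n : ℕ} (P : Set (Euc n)) : Prop :=
  ∃ R > 0, ∀ x : Euc n, ∃ p ∈ P, ‖p - x‖ < R

/-- `P` has finite local complexity: for each `r > 0`, only finitely many `r`-patches
around points of `P`. -/
def FLC {n : ℕ} (P : Set (Euc n)) : Prop :=
  ∀ r > 0, {s : Set (Euc n) | ∃ x ∈ P, s = patch P r x}.Finite

/-- `f` is `P`-equivariant with range `R`. -/
def EquivRange {n : ℕ} {F : Type*} (P : Set (Euc n)) (R : ℝ) (f : Euc n → F) : Prop :=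
  ∀ x y : Euc n, patch P R x = patch P R y → f x = f y

/-- `f` is strongly `P`-equivariant: `P`-equivariant with some finite range `R > 0`. -/
def StrongEquiv {n : ℕ} {F : Type*} (P : Set (Euc n)) (f : Euc n → F) : Prop :=
  ∃ R > 0, EquivRange P R f

/-- `f`, viewed as a function on the subset `Q`, is `P`-equivariant with range `R`. -/
def EquivRangeOn {n : ℕ} {F : Type*} (P Q : Set (Euc n)) (R : ℝ) (f : Euc n → F) : Prop :=
  ∀ x ∈ Q, ∀ y ∈ Q, patch P R x = patch P R y → f x = f y

/-- `f`, viewed as a function on the subset `Q`, is strongly `P`-equivariant. -/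
def StrongEquivOn {n : ℕ} {F : Type*} (P Q : Set (Euc n)) (f : Euc n → F) : Prop :=
  ∃ R > 0, EquivRangeOn P Q R f

/-- `Q` is locally derivable from `P`. -/
def LocallyDerivable {n : ℕ} (P Q : Set (Euc n)) : Prop :=
  ∃ R > 0, ∀ x y : Euc n, patch P R x = patch P R y →
    ({0} : Set (Euc n)) ∩ shiftSet Q x = ({0} : Set (Euc n)) ∩ shiftSet Q y

/-- Hypothesis (H): for every `r > 0` there is `r' > 0` such that for all `x`,
`B(φ(x), r) ∩ φ(P) ⊆ φ(B(x, r') ∩ P)`. -/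
def HypoH {n : ℕ} (P : Set (Euc n)) (φ : Euc n → Euc n) : Prop :=
  ∀ r > 0, ∃ r' > 0, ∀ x : Euc n, ball (φ x) r ∩ (φ '' P) ⊆ φ '' (ball x r' ∩ P)

/-- The pattern metric `D` on closed subsets of ℝⁿ. -/
def patternDist {n : ℕ} (A B : Set (Euc n)) : ℝ :=
  sInf {ε : ℝ | 0 < ε ∧ Metric.hausdorffDist
    ((ball (0 : Euc n) (1 / ε) ∩ A) ∪ sphere (0 : Euc n) (1 / ε))
    ((ball (0 : Euc n) (1 / ε) ∩ B) ∪ sphere (0 : Euc n) (1 / ε)) ≤ ε}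

/-- A continuous `f : ℝⁿ → ℝⁿ` is weakly `P`-equivariant if it is uniformly approximated
by strongly `P`-equivariant continuous functions. -/
def WeakEquiv {n : ℕ} (P : Set (Euc n)) (f : Euc n → Euc n) : Prop :=
  ∀ ε > 0, ∃ g : Euc n → Euc n, Continuous g ∧ StrongEquiv P g ∧ ∀ x : Euc n, ‖f x - g x‖ < ε

/-- `P` is aperiodic: the only translation fixing `P` is `0`. -/
def IsAperiodicSet {n : ℕ} (P : Set (Euc n)) : Prop :=
  ∀ x : Euc n, shiftSet P x = P → x = 0

open Function Topology

section TranslateSum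

/-- The sum `∑ p ∈ P, χ (· - p) • a p` of translates of `χ`, that is, the convolution of `χ` with
the Dirac comb on `P` with weights `a`. It extends `a` from `P` to the whole space when `χ` is a
bump function with `χ 0 = 1` and small support. Being a `finsum`, it takes the value `0` where
infinitely many terms are nonzero. -/
def translateSum {E 𝕜 F : Type*} [Sub E] [AddCommMonoid F] [SMul 𝕜 F]
    (P : Set E) (χ : E → 𝕜) (a : E → F) (x : E) : F :=
  ∑ᶠ p ∈ P, χ (x - p) • a p

theorem translateSum_apply_of_forall_ne {E 𝕜 F : Type*} [Sub E] [Zero 𝕜] [AddCommMonoid F]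
    [SMulWithZero 𝕜 F] {P : Set E} {χ : E → 𝕜} {x p : E} (h : ∀ q ∈ P, q ≠ p → χ (x - q) = 0)
    (a : E → F) : translateSum P χ a x = χ (x - p) • P.indicator a p := by
  rw [translateSum, finsum_mem_def, finsum_eq_single _ p, indicator_smul_apply]
  intro q hq
  rw [indicator_apply_eq_zero]
  intro hqP
  rw [h q hqP hq, zero_smul]

section Separated

variable {E 𝕜 F : Type*} [SeminormedAddCommGroup E] {P : Set E} {χ : E → 𝕜} {r R : ℝ}

theorem translateSum_apply_of_mem [Zero 𝕜] [AddCommMonoid F] [SMulWithZero 𝕜 F]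
    (hP : P.PairwiseDisjoint (ball · r)) (hχ : support χ ⊆ ball 0 r) (a : E → F) {p : E}
    (hp : p ∈ P) : translateSum P χ a p = χ 0 • a p := by
  have hne : ∀ q ∈ P, q ≠ p → χ (p - q) = 0 := by
    intro q hq hqp
    by_contra hχq
    have hpq : p ∈ ball q r := mem_ball_iff_norm.2 (mem_ball_zero_iff.1 (hχ hχq))
    exact hqp (hP.elim_set hq hp p hpq (mem_ball_self (pos_of_mem_ball hpq)))
  rw [translateSum_apply_of_forall_ne hne, sub_self, indicator_of_mem hp]

theorem exists_translateSum_eventuallyEq [Zero 𝕜] [AddCommMonoid F] [SMulWithZero 𝕜 F]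
    (hP : P.PairwiseDisjoint (ball · R)) (hχ : support χ ⊆ ball 0 r) (hr : r < R) (x : E) :
    ∃ p, ∀ a : E → F,
      translateSum P χ a =ᶠ[𝓝 x] fun y => χ (y - p) • P.indicator a p := by
  obtain ⟨p, hp⟩ : ∃ p, ∀ q ∈ P, x ∈ ball q R → q = p := by
    by_cases h : ∃ p ∈ P, x ∈ ball p R
    · obtain ⟨p, hpP, hxp⟩ := h
      exact ⟨p, fun q hq hxq => hP.elim_set hq hpP x hxq hxp⟩
    · exact ⟨x, fun q hq hxq => (h ⟨q, hq, hxq⟩).elim⟩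
  refine ⟨p, fun a => ?_⟩
  filter_upwards [ball_mem_nhds x (sub_pos.2 hr)] with y hy
  refine translateSum_apply_of_forall_ne (fun q hq hqp => ?_) a
  by_contra hχq
  have hyq : dist y q < r := by simpa [dist_eq_norm] using hχ hχq
  have hxq : dist x q < R := by
    linarith [dist_triangle_left x q y, mem_ball.1 hy]
  exact hqp (hp q hq hxq)

theorem translateSum_sub [Semiring 𝕜] [AddCommGroup F] [Module 𝕜 F]
    (hP : P.PairwiseDisjoint (ball · R)) (hχ : support χ ⊆ ball 0 r) (hr : r < R)
    (a b : E → F) :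
    translateSum P χ (a - b) = translateSum P χ a - translateSum P χ b := by
  ext x
  obtain ⟨p, hp⟩ := exists_translateSum_eventuallyEq (F := F) hP hχ hr x
  rw [Pi.sub_apply, (hp (a - b)).eq_of_nhds, (hp a).eq_of_nhds, (hp b).eq_of_nhds, ← smul_sub,
    indicator_sub', Pi.sub_apply]

end Separated

section Calculus

variable {𝕜 E F : Type*} [NontriviallyNormedField 𝕜] [NormedAddCommGroup E] [NormedSpace 𝕜 E]
  [NormedAddCommGroup F] [NormedSpace 𝕜 F] {P : Set E} {χ : E → 𝕜} {r R : ℝ}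

theorem exists_norm_iteratedFDeriv_le_of_hasCompactSupport {f : E → F} {l : ℕ}
    (hf : ContDiff 𝕜 l f) (hsupp : HasCompactSupport f) :
    ∃ C > 0, ∀ i ≤ l, ∀ x, ‖iteratedFDeriv 𝕜 i f x‖ ≤ C := by
  have hbdd (i : Iic l) : ∃ C, ∀ x, ‖iteratedFDeriv 𝕜 i f x‖ ≤ C :=
    (hsupp.iteratedFDeriv i).exists_bound_of_continuous
      (hf.continuous_iteratedFDeriv (by exact_mod_cast i.2))
  choose C hC using hbdd
  obtain ⟨M, hM⟩ := (finite_range C).bddAbove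
  refine ⟨max M 1, by positivity, fun i hi x => ?_⟩
  exact (hC ⟨i, hi⟩ x).trans ((hM (mem_range_self _)).trans (le_max_left M 1))

theorem norm_iteratedFDeriv_smul_const_le {i : ℕ} {f : E → 𝕜} {x : E}
    (hf : ContDiffAt 𝕜 i f x) (c : F) :
    ‖iteratedFDeriv 𝕜 i (fun y => f y • c) x‖ ≤ ‖c‖ * ‖iteratedFDeriv 𝕜 i f x‖ := by
  have h := (ContinuousLinearMap.toSpanSingleton 𝕜 c).norm_iteratedFDeriv_comp_left hf le_rfl
  rwa [ContinuousLinearMap.norm_toSpanSingleton] at h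

theorem contDiff_translateSum (hP : P.PairwiseDisjoint (ball · R)) (hχ : support χ ⊆ ball 0 r)
    (hr : r < R) {k : WithTop ℕ∞} (hk : ContDiff 𝕜 k χ) (a : E → F) :
    ContDiff 𝕜 k (translateSum P χ a) := by
  refine contDiff_iff_contDiffAt.2 fun x => ?_
  obtain ⟨p, hp⟩ := exists_translateSum_eventuallyEq (F := F) hP hχ hr x
  have hsmooth : ContDiff 𝕜 k fun y => χ (y - p) • P.indicator a p := by fun_prop
  exact hsmooth.contDiffAt.congr_of_eventuallyEq (hp a)

theorem norm_iteratedFDeriv_translateSum_le (hP : P.PairwiseDisjoint (ball · R))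
    (hχ : support χ ⊆ ball 0 r) (hr : r < R) {i : ℕ} (hi : ContDiff 𝕜 i χ) {a : E → F} {c C : ℝ}
    (hc : 0 ≤ c) (ha : ∀ p ∈ P, ‖a p‖ ≤ c) (hC : ∀ x, ‖iteratedFDeriv 𝕜 i χ x‖ ≤ C) (x : E) :
    ‖iteratedFDeriv 𝕜 i (translateSum P χ a) x‖ ≤ c * C := by
  obtain ⟨p, hp⟩ := exists_translateSum_eventuallyEq (F := F) hP hχ hr x
  have hindicator : ‖P.indicator a p‖ ≤ c := by
    rw [norm_indicator_eq_indicator_norm]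
    exact indicator_apply_le' (ha p) fun _ => hc
  have htranslate : ContDiff 𝕜 i fun y => χ (y - p) := by fun_prop
  calc ‖iteratedFDeriv 𝕜 i (translateSum P χ a) x‖
      = ‖iteratedFDeriv 𝕜 i (fun y => χ (y - p) • P.indicator a p) x‖ := by
        rw [((hp a).iteratedFDeriv 𝕜 i).eq_of_nhds]
    _ ≤ ‖P.indicator a p‖ * ‖iteratedFDeriv 𝕜 i (fun y => χ (y - p)) x‖ :=
        norm_iteratedFDeriv_smul_const_le htranslate.contDiffAt _
    _ ≤ c * C := by
        rw [iteratedFDeriv_comp_sub]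
        exact mul_le_mul hindicator (hC _) (norm_nonneg _) hc

end Calculus

end TranslateSum

section Patch

variable {n : ℕ} {P : Set (Euc n)} {r R : ℝ} {x y v : Euc n}

theorem UnifDiscrete.exists_pairwiseDisjoint_ball (hP : UnifDiscrete P) :
    ∃ r > 0, P.PairwiseDisjoint (ball · r) := by
  obtain ⟨δ, hδ, hsep⟩ := hP
  refine ⟨δ / 2, half_pos hδ, fun p hp q hq hpq => ball_disjoint_ball ?_⟩
  rw [add_halves, dist_eq_norm]
  exact hsep p hp q hq hpq

theorem mem_patch : v ∈ patch P r x ↔ ‖v‖ < r ∧ x + v ∈ P := by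
  simp [patch, shiftSet, sub_eq_iff_eq_add']

theorem patch_add_eq_patch_add (h : patch P (R + r) x = patch P (R + r) y) (hv : ‖v‖ ≤ r) :
    patch P R (x + v) = patch P R (y + v) := by
  ext w
  simp only [mem_patch, add_assoc]
  refine and_congr_right fun hw => ?_
  have hvw : ‖v + w‖ < R + r := (norm_add_le v w).trans_lt (by linarith)
  simpa only [mem_patch, hvw, true_and] using Set.ext_iff.1 h (v + w)

variable {𝕜 F : Type*} [Zero 𝕜] [AddCommMonoid F] [SMulWithZero 𝕜 F] {χ : Euc n → 𝕜}

theorem translateSum_eq_finsum_mem_patch (hχ : support χ ⊆ ball 0 r) (a : Euc n → F)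
    (x : Euc n) :
    translateSum P χ a x = ∑ᶠ v ∈ patch P r x, χ (-v) • a (x + v) := by
  calc translateSum P χ a x
      = ∑ᶠ v ∈ shiftSet P x, χ (-v) • a (x + v) := by
        rw [shiftSet, finsum_mem_image sub_left_injective.injOn]
        simp only [translateSum, neg_sub, add_sub_cancel]
    _ = ∑ᶠ v ∈ patch P r x, χ (-v) • a (x + v) := by
        refine finsum_mem_inter_support_eq' _ _ _ fun v hv => ⟨fun hvP => ⟨?_, hvP⟩, And.right⟩
        simpa using hχ (left_ne_zero_of_smul hv)

theorem EquivRangeOn.translateSum {a : Euc n → F} (ha : EquivRangeOn P P R a) (hR : 0 ≤ R)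
    (hχ : support χ ⊆ ball 0 r) : EquivRange P (R + r) (translateSum P χ a) := by
  intro x y h
  have hxy : patch P r x = patch P r y := by
    simpa using patch_add_eq_patch_add (v := 0) (add_comm R r ▸ h) (norm_zero.trans_le hR)
  rw [translateSum_eq_finsum_mem_patch hχ, translateSum_eq_finsum_mem_patch hχ, hxy]
  refine finsum_mem_congr rfl fun v hv => ?_
  obtain ⟨hvr, hyv⟩ := mem_patch.1 hv
  obtain ⟨-, hxv⟩ := mem_patch.1 (hxy ▸ hv)
  rw [ha (x + v) hxv (y + v) hyv (patch_add_eq_patch_add h hvr.le)]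

end Patch

theorem stmt2_general {n : ℕ} {F : Type*} [NormedAddCommGroup F] [NormedSpace ℝ F]
    (P : Set (Euc n)) (hUD : UnifDiscrete P) (ψ : Euc n → F)
    (happ : ∀ ε > 0, ∃ ψε : Euc n → F, StrongEquivOn P P ψε ∧ ∀ p ∈ P, ‖ψ p - ψε p‖ < ε) :
    ∃ φ : Euc n → F, ContDiff ℝ (⊤ : ℕ∞) φ ∧ (∀ p ∈ P, φ p = ψ p) ∧
      ∀ l : ℕ, ∀ ε > 0, ∃ φ' : Euc n → F, ContDiff ℝ (⊤ : ℕ∞) φ' ∧ StrongEquiv P φ' ∧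
        ∀ i ≤ l, ∀ x : Euc n, ‖iteratedFDeriv ℝ i (fun y => φ y - φ' y) x‖ < ε := by
  obtain ⟨R, hR, hP⟩ := hUD.exists_pairwiseDisjoint_ball
  have hr : R / 2 < R := half_lt_self hR
  obtain ⟨χ, hχ_tsupport, hχ_compact, hχ_smooth, -, hχ_zero⟩ :=
    exists_contDiff_tsupport_subset (n := ⊤) (ball_mem_nhds (0 : Euc n) (half_pos hR))
  have hχ : support χ ⊆ ball 0 (R / 2) := (subset_tsupport χ).trans hχ_tsupport
  have hχ_nat (k : ℕ) : ContDiff ℝ k χ := hχ_smooth.of_le (by exact_mod_cast le_top)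
  refine ⟨translateSum P χ ψ, contDiff_translateSum hP hχ hr hχ_smooth ψ, fun p hp => ?_,
    fun l ε hε => ?_⟩
  · rw [translateSum_apply_of_mem hP (hχ.trans (ball_subset_ball hr.le)) ψ hp, hχ_zero, one_smul]
  obtain ⟨C, hC, hχ_bound⟩ :=
    exists_norm_iteratedFDeriv_le_of_hasCompactSupport (hχ_nat l) hχ_compact
  have hη : 0 < ε / (2 * C) := by positivity
  obtain ⟨ψ', ⟨R', hR', hψ'⟩, hclose⟩ := happ (ε / (2 * C)) hη
  refine ⟨translateSum P χ ψ', contDiff_translateSum hP hχ hr hχ_smooth ψ',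
    ⟨R' + R / 2, by positivity, hψ'.translateSum hR'.le hχ⟩, fun i hi x => ?_⟩
  calc ‖iteratedFDeriv ℝ i (translateSum P χ ψ - translateSum P χ ψ') x‖
      = ‖iteratedFDeriv ℝ i (translateSum P χ (ψ - ψ')) x‖ := by rw [translateSum_sub hP hχ hr]
    _ ≤ ε / (2 * C) * C :=
        norm_iteratedFDeriv_translateSum_le hP hχ hr (hχ_nat i) hη.le
          (fun p hp => (hclose p hp).le) (hχ_bound i hi) x
    _ < ε := by
        field_simp
        linarith

theorem stmt2 {n m : ℕ} (P : Set (Euc n)) (hUD : UnifDiscrete P) (hFLC : FLC P)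
    (ψ : Euc n → Euc m)
    (happ : ∀ ε > 0, ∃ ψε : Euc n → Euc m, StrongEquivOn P P ψε ∧
      ∀ p ∈ P, ‖ψ p - ψε p‖ < ε) :
    ∃ φ : Euc n → Euc m, ContDiff ℝ (⊤ : ℕ∞) φ ∧ (∀ p ∈ P, φ p = ψ p) ∧
      ∀ l : ℕ, ∀ ε > 0, ∃ φ' : Euc n → Euc m, ContDiff ℝ (⊤ : ℕ∞) φ' ∧ StrongEquiv P φ' ∧
        ∀ i ≤ l, ∀ x : Euc n, ‖iteratedFDeriv ℝ i (fun y => φ y - φ' y) x‖ < ε := by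
  exact stmt2_general P hUD ψ happ
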